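/- arXiv:1012.0023 — 3 statements merged into one kernel-verified Lean document; each statement's English description precedes it below -/
import Mathlib

section
/- Let H be an infinite subset of the set of positive perfect squares {1², 2², 3², …}, and let L_H = { a^k b^k a^l b^l : k, l ≥ 1, and (k ∈ H or l ∈ H) } ∪ { a^m b^m : m ≥ 1 } over the alphabet {a, b}. Then L_H is not context-free. -/
/-!
Fix `k ∉ H` with `k ≥ 1`. A word of `L_H` with prefix `aᵏ b` is either `aᵏ bᵏ` or `aᵏ bᵏ aˡ bˡ` with
`l ∈ H`, so a long word `aᵏ bᵏ aˡ bˡ` that could be pumped without destroying this prefix would put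
an infinite arithmetic progression starting at `l` into `H`. The gaps between consecutive squares
grow, so a set of squares contains no such progression.

That the prefix survives pumping comes from a pumping lemma relative to a congruence `φ` of finite
index on words, here `φ w = w.take (k + 1)`: along a path of a parse tree one looks for a repetition
of a pair `(A, φ w)`, where the nonterminal `A` derives `w`, rather than of `A` alone.
-/

/-- The `i`-fold repetition `v^i` of a word `v`. -/
def wordPow {T : Type} (v : List T) : ℕ → List T
  | 0 => []
  | n + 1 => v ++ wordPow v n

/-- A production of a linear grammar: either `A → u` (with `u` a terminal word)
or `A → u B w` (with `u, w` terminal words and `B` a nonterminal). -/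
structure LinearRule (T N : Type) where
  input : N
  output : List T ⊕ (List T × N × List T)

/-- `LinDerives rs A p` : from nonterminal `A`, the linear productions in `rs`
derive the terminal word `p`. -/
inductive LinDerives {T N : Type} (rs : List (LinearRule T N)) : N → List T → Prop
  | terminal {A : N} {u : List T} (hr : (⟨A, Sum.inl u⟩ : LinearRule T N) ∈ rs) :
      LinDerives rs A u
  | step {A B : N} {u w p : List T}
      (hr : (⟨A, Sum.inr (u, B, w)⟩ : LinearRule T N) ∈ rs)
      (hp : LinDerives rs B p) :
      LinDerives rs A (u ++ p ++ w)

/-- A linear grammar: a type of nonterminals, a start symbol, and a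
finite list of linear productions. -/
structure LinearGrammar (T : Type) where
  NT : Type
  start : NT
  rules : List (LinearRule T NT)

/-- The language generated by a linear grammar. -/
def LinearGrammar.language {T : Type} (G : LinearGrammar T) : Set (List T) :=
  {p | LinDerives G.rules G.start p}

/-- A linear grammar is `(g/h)`-rated linear (`k = g/h`) if every production
`A → u B w` satisfies `h * |w| = g * |u|`. -/
def LinearGrammar.IsRated {T : Type} (g h : ℕ) (G : LinearGrammar T) : Prop :=
  ∀ r ∈ G.rules, ∀ u w, ∀ B : G.NT, r.output = Sum.inr (u, B, w) →
    h * w.length = g * u.length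

/-- A grammar generates exactly the language `L`, up to the empty word. -/
def LinearGrammar.GeneratesModEmpty {T : Type} (G : LinearGrammar T) (L : Set (List T)) :
    Prop :=
  ∀ p : List T, p ≠ [] → (p ∈ L ↔ p ∈ G.language)

/-- A language is linear if some linear grammar generates it, up to the empty word. -/
def IsLinearLang {T : Type} (L : Set (List T)) : Prop :=
  ∃ G : LinearGrammar T, G.GeneratesModEmpty L

/-- A language is `(g/h)`-rated linear if some `(g/h)`-rated linear grammar
generates it, up to the empty word. -/
def IsRatedLinearLang {T : Type} (g h : ℕ) (L : Set (List T)) : Prop :=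
  ∃ G : LinearGrammar T, G.IsRated g h ∧ G.GeneratesModEmpty L

/-- A `k`-linear grammar: a linear grammar together with the extra production
`S → S₁S₂⋯S_k` from a start symbol `S`, where none of the `Sᵢ` (the `heads`)
occurs on the right-hand side of any other production and `S` occurs in no other
production at all (the latter is automatic here, since the start symbol is kept
as a fresh symbol outside the type `NT` of the remaining nonterminals). -/
structure KLinearGrammar (T : Type) (k : ℕ) where
  NT : Type
  heads : Fin k → NT
  rules : List (LinearRule T NT)
  heads_not_on_rhs : ∀ r ∈ rules, ∀ u w, ∀ B : NT, r.output = Sum.inr (u, B, w) →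
    ∀ i : Fin k, B ≠ heads i

/-- The language generated by a `k`-linear grammar: as the start symbol occurs
only in the production `S → S₁S₂⋯S_k`, it consists of the concatenations
`p₁p₂⋯p_k` where each `pᵢ` is derived from `Sᵢ` by the linear productions. -/
def KLinearGrammar.language {T : Type} {k : ℕ} (G : KLinearGrammar T k) : Set (List T) :=
  {p | ∃ ps : Fin k → List T, p = (List.ofFn ps).flatten ∧
    ∀ i : Fin k, LinDerives G.rules (G.heads i) (ps i)}

/-- A language is `k`-linear if some `k`-linear grammar generates it, up to the
empty word. -/
def IsKLinearLang {T : Type} (k : ℕ) (L : Set (List T)) : Prop :=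
  ∃ G : KLinearGrammar T k, ∀ p : List T, p ≠ [] → (p ∈ L ↔ p ∈ G.language)

/-- A language is metalinear if it is `k`-linear for some positive integer `k`. -/
def IsMetalinearLang {T : Type} (L : Set (List T)) : Prop :=
  ∃ k : ℕ, 0 < k ∧ IsKLinearLang k L

/-- The language `L_H = {aᵏ bᵏ aˡ bˡ : k, l ≥ 1, k ∈ H or l ∈ H} ∪ {aᵐ bᵐ : m ≥ 1}`
(Example 5).  Here the alphabet `{a, b}` is `Fin 2` with `a = 0`, `b = 1`. -/
def LH (H : Set ℕ) : Set (List (Fin 2)) :=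
  {p | (∃ k l : ℕ, 1 ≤ k ∧ 1 ≤ l ∧ (k ∈ H ∨ l ∈ H) ∧
          p = List.replicate k 0 ++ List.replicate k 1 ++
              List.replicate l 0 ++ List.replicate l 1) ∨
        (∃ m : ℕ, 1 ≤ m ∧ p = List.replicate m 0 ++ List.replicate m 1)}

section Forms

variable {T N : Type*}

/-- The language of the sentential form `s` when each nonterminal `A` stands for the language `σ A`:
the product of the languages of its symbols. -/
def formLanguage (σ : N → Language T) (s : List (Symbol T N)) : Language T :=
  (s.map fun
    | .terminal t => {[t]}
    | .nonterminal A => σ A).prod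

variable {σ : N → Language T}

lemma formLanguage_cons_terminal (t : T) (s : List (Symbol T N)) :
    formLanguage σ (.terminal t :: s) = {[t]} * formLanguage σ s :=
  List.prod_cons

lemma formLanguage_cons_nonterminal (A : N) (s : List (Symbol T N)) :
    formLanguage σ (.nonterminal A :: s) = σ A * formLanguage σ s :=
  List.prod_cons

lemma formLanguage_singleton_nonterminal (A : N) : formLanguage σ [.nonterminal A] = σ A :=
  List.prod_singleton

lemma formLanguage_append (s s' : List (Symbol T N)) :
    formLanguage σ (s ++ s') = formLanguage σ s * formLanguage σ s' := by
  simp only [formLanguage, List.map_append, List.prod_append]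

lemma cons_mem_singleton_mul {t : T} {w : List T} {L : Language T} (hw : w ∈ L) :
    t :: w ∈ ({[t]} : Language T) * L :=
  Language.append_mem_mul (a := [t]) rfl hw

lemma mem_formLanguage_map_terminal (w : List T) : w ∈ formLanguage σ (w.map .terminal) := by
  induction w with
  | nil => exact Language.nil_mem_one
  | cons t w ih =>
    rw [List.map_cons, formLanguage_cons_terminal]
    exact cons_mem_singleton_mul ih

lemma formLanguage_mono {τ : N → Language T} (h : σ ≤ τ) (s : List (Symbol T N)) :
    formLanguage σ s ≤ formLanguage τ s := by
  induction s with
  | nil => exact le_rfl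
  | cons x s ih =>
    cases x with
    | terminal t =>
      simp only [formLanguage_cons_terminal]
      exact mul_le_mul_right ih _
    | nonterminal A =>
      simp only [formLanguage_cons_nonterminal]
      exact mul_le_mul' (h A) ih

lemma exists_long_factor_of_mem_formLanguage {c : ℕ} (hc : 0 < c) {s : List (Symbol T N)}
    {w : List T} (hw : w ∈ formLanguage σ s) (hlen : s.length * c < w.length) :
    ∃ A s₁ s₂ p z q, s = s₁ ++ .nonterminal A :: s₂ ∧ w = p ++ z ++ q ∧
      p ∈ formLanguage σ s₁ ∧ z ∈ σ A ∧ q ∈ formLanguage σ s₂ ∧ c < z.length := by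
  induction s generalizing w with
  | nil =>
    obtain rfl : w = [] := hw
    simp at hlen
  | cons x s ih =>
    rw [List.length_cons, add_one_mul] at hlen
    cases x with
    | terminal t =>
      rw [formLanguage_cons_terminal] at hw
      obtain ⟨_, rfl, w, hs, rfl⟩ := Language.mem_mul.mp hw
      rw [List.length_append, List.length_singleton] at hlen
      obtain ⟨A, s₁, s₂, p, z, q, rfl, rfl, hp, hz, hq, hcz⟩ := ih hs (by omega)
      refine ⟨A, .terminal t :: s₁, s₂, t :: p, z, q, rfl, rfl, ?_, hz, hq, hcz⟩
      rw [formLanguage_cons_terminal]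
      exact cons_mem_singleton_mul hp
    | nonterminal A =>
      rw [formLanguage_cons_nonterminal] at hw
      obtain ⟨v, hv, w, hs, rfl⟩ := Language.mem_mul.mp hw
      rw [List.length_append] at hlen
      by_cases hcv : c < v.length
      · exact ⟨A, [], s, [], v, w, rfl, rfl, Language.nil_mem_one, hv, hs, hcv⟩
      · obtain ⟨B, s₁, s₂, p, z, q, rfl, rfl, hp, hz, hq, hcz⟩ := ih hs (by omega)
        refine ⟨B, .nonterminal A :: s₁, s₂, v ++ p, z, q, rfl, by simp, ?_, hz, hq, hcz⟩
        rw [formLanguage_cons_nonterminal]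
        exact Language.append_mem_mul hv hp

end Forms

section Derivations

variable {T : Type*} {g : ContextFreeGrammar T}

/-- The language of terminal words derived from the nonterminal `A`. -/
def derivedLanguage (g : ContextFreeGrammar T) (A : g.NT) : Language T :=
  {w | g.Derives [.nonterminal A] (w.map .terminal)}

lemma derives_rule {r : ContextFreeRule T g.NT} (hr : r ∈ g.rules) :
    g.Derives [.nonterminal r.input] r.output :=
  .single ⟨r, hr, .input_output⟩

lemma derives_append {s₁ s₂ t₁ t₂ : List (Symbol T g.NT)} (h₁ : g.Derives s₁ t₁)
    (h₂ : g.Derives s₂ t₂) : g.Derives (s₁ ++ s₂) (t₁ ++ t₂) :=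
  (h₁.append_right s₂).trans (h₂.append_left t₁)

lemma derives_of_mem_formLanguage {s : List (Symbol T g.NT)} {w : List T}
    (hw : w ∈ formLanguage (derivedLanguage g) s) : g.Derives s (w.map .terminal) := by
  induction s generalizing w with
  | nil =>
    obtain rfl : w = [] := hw
    exact .refl _
  | cons x s ih =>
    cases x with
    | terminal t =>
      rw [formLanguage_cons_terminal] at hw
      obtain ⟨_, rfl, w, hs, rfl⟩ := Language.mem_mul.mp hw
      exact (ih hs).append_left [.terminal t]
    | nonterminal A =>
      rw [formLanguage_cons_nonterminal] at hw
      obtain ⟨v, hv, w, hs, rfl⟩ := Language.mem_mul.mp hw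
      rw [List.map_append]
      exact derives_append hv (ih hs)

lemma formLanguage_output_le_derivedLanguage {r : ContextFreeRule T g.NT} (hr : r ∈ g.rules) :
    formLanguage (derivedLanguage g) r.output ≤ derivedLanguage g r.input :=
  fun _ hw ↦ (derives_rule hr).trans (derives_of_mem_formLanguage hw)

lemma formLanguage_le_of_produces {σ : g.NT → Language T}
    (hσ : ∀ r ∈ g.rules, formLanguage σ r.output ≤ σ r.input) {s s' : List (Symbol T g.NT)}
    (h : g.Produces s s') : formLanguage σ s' ≤ formLanguage σ s := by
  obtain ⟨r, hr, hrw⟩ := h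
  obtain ⟨p, q, rfl, rfl⟩ := hrw.exists_parts
  simp only [formLanguage_append, formLanguage_singleton_nonterminal]
  gcongr
  exact hσ r hr

-- The induction principle for parse trees: `derivedLanguage g` is the least solution of the system
-- of inequalities given by the rules.
lemma derivedLanguage_le {σ : g.NT → Language T}
    (hσ : ∀ r ∈ g.rules, formLanguage σ r.output ≤ σ r.input) : derivedLanguage g ≤ σ := by
  intro A w hw
  suffices ∀ s, g.Derives s (w.map .terminal) → w ∈ formLanguage σ s by
    exact (formLanguage_singleton_nonterminal (σ := σ) A).le (this _ hw)
  intro s hs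
  induction hs using Relation.ReflTransGen.head_induction_on with
  | refl => exact mem_formLanguage_map_terminal w
  | head h _ ih => exact formLanguage_le_of_produces hσ h ih

/-- The words `u` and `y` form a context leading from the nonterminal `A` to `B`. This is the
semantic counterpart of `A ⇒* u B y`: only the words derived from `A` and `B` are compared. -/
def IsContext (g : ContextFreeGrammar T) (A B : g.NT) (u y : List T) : Prop :=
  ∀ ⦃t⦄, t ∈ derivedLanguage g B → u ++ t ++ y ∈ derivedLanguage g A

lemma IsContext.refl (A : g.NT) : IsContext g A A [] [] :=
  fun _ ht ↦ by simpa using ht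

lemma IsContext.trans {A B C : g.NT} {u y u' y' : List T} (h : IsContext g A B u y)
    (h' : IsContext g B C u' y') : IsContext g A C (u ++ u') (y' ++ y) :=
  fun _ ht ↦ by simpa using h (h' ht)

lemma isContext_of_rule {r : ContextFreeRule T g.NT} (hr : r ∈ g.rules) {B : g.NT}
    {s₁ s₂ : List (Symbol T g.NT)} (hout : r.output = s₁ ++ .nonterminal B :: s₂) {p q : List T}
    (hp : p ∈ formLanguage (derivedLanguage g) s₁) (hq : q ∈ formLanguage (derivedLanguage g) s₂) :
    IsContext g r.input B p q := by
  refine fun t ht ↦ formLanguage_output_le_derivedLanguage hr ?_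
  rw [hout, formLanguage_append, formLanguage_cons_nonterminal, List.append_assoc]
  exact Language.append_mem_mul hp (Language.append_mem_mul ht hq)

/-- The word `w` derived from `A` branches: it is derived from `A` through `A'` without emitting any
letter, and then a factor of length more than `c` is derived from one of the children of `A'`, while
the others contribute at least one letter. -/
def Branches (g : ContextFreeGrammar T) (c : ℕ) (A : g.NT) (w : List T) : Prop :=
  ∃ r ∈ g.rules, IsContext g A r.input [] [] ∧ ∃ B p z q, w = p ++ z ++ q ∧ p ++ q ≠ [] ∧
    IsContext g r.input B p q ∧ z ∈ derivedLanguage g B ∧ c < z.length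

lemma branches_of_mem_derivedLanguage {m c : ℕ} (hm : ∀ r ∈ g.rules, r.output.length ≤ m)
    (hc : 0 < c) {A : g.NT} {w : List T} (hw : w ∈ derivedLanguage g A)
    (hlen : m * c < w.length) : Branches g c A w := by
  let σ : g.NT → Language T := fun A ↦
    {w | w ∈ derivedLanguage g A ∧ (m * c < w.length → Branches g c A w)}
  have hσ : σ ≤ derivedLanguage g := fun _ _ h ↦ h.1
  refine (derivedLanguage_le (σ := σ) (fun r hr w hw ↦ ⟨?_, fun hlen ↦ ?_⟩) A hw).2 hlen
  · exact formLanguage_output_le_derivedLanguage hr (formLanguage_mono hσ _ hw)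
  obtain ⟨B, s₁, s₂, p, z, q, hout, rfl, hp, hz, hq, hcz⟩ :=
    exists_long_factor_of_mem_formLanguage hc hw
      ((Nat.mul_le_mul_right c (hm r hr)).trans_lt hlen)
  have hctx : IsContext g r.input B p q :=
    isContext_of_rule hr hout (formLanguage_mono hσ _ hp) (formLanguage_mono hσ _ hq)
  by_cases hpq : p ++ q = []
  · obtain ⟨rfl, rfl⟩ := List.append_eq_nil_iff.mp hpq
    rw [List.nil_append, List.append_nil] at hlen ⊢
    obtain ⟨r', hr', hctx', hbranch⟩ := hz.2 hlen
    exact ⟨r', hr', hctx.trans hctx', hbranch⟩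
  · exact ⟨r, hr, .refl _, B, p, z, q, rfl, hpq, hctx, hz.1, hcz⟩

end Derivations

section Pumping

variable {T C : Type*} {g : ContextFreeGrammar T} {φ : List T → C}

/-- The word `w` derived from `A` factors as `u v z x y` with `v x` nonempty, where `v` and `x` form
a context leading from a nonterminal to itself that can be removed without changing `φ`. -/
def Pumpable (g : ContextFreeGrammar T) (φ : List T → C) (A : g.NT) (w : List T) : Prop :=
  ∃ B u v z x y, w = u ++ (v ++ z ++ x) ++ y ∧ v ++ x ≠ [] ∧ φ (v ++ z ++ x) = φ z ∧
    IsContext g A B u y ∧ IsContext g B B v x ∧ z ∈ derivedLanguage g B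

lemma Pumpable.of_isContext {A B : g.NT} {p z q : List T} (hctx : IsContext g A B p q)
    (h : Pumpable g φ B z) : Pumpable g φ A (p ++ z ++ q) := by
  obtain ⟨D, u, v, z, x, y, rfl, hne, hφ, hD, hloop, hz⟩ := h
  exact ⟨D, p ++ u, v, z, x, y ++ q, by simp, hne, hφ, hctx.trans hD, hloop, hz⟩

/-- The word `w` derived from `A` contains a factor derived from the left-hand side `B` of a rule
such that `B`, paired with the `φ`-value of this factor, lies outside `V`. In the pumping argument
`V` consists of the pairs not yet met on a path of the parse tree. -/
def Escapes (g : ContextFreeGrammar T) (φ : List T → C) (V : Finset (g.NT × C)) (A : g.NT)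
    (w : List T) : Prop :=
  ∃ r ∈ g.rules, ∃ u z y, w = u ++ z ++ y ∧ (r.input, φ z) ∉ V ∧
    IsContext g A r.input u y ∧ z ∈ derivedLanguage g r.input

lemma Escapes.of_isContext {V : Finset (g.NT × C)} {A B : g.NT} {p z q : List T}
    (hctx : IsContext g A B p q) (h : Escapes g φ V B z) : Escapes g φ V A (p ++ z ++ q) := by
  obtain ⟨r, hr, u, z, y, rfl, hV, hB, hz⟩ := h
  exact ⟨r, hr, p ++ u, z, y ++ q, by simp, hV, hctx.trans hB, hz⟩

lemma pumpable_or_escapes_of_escapes_erase [DecidableEq (g.NT × C)] {V : Finset (g.NT × C)}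
    {A B : g.NT} {p z q : List T} (hpq : p ++ q ≠ []) (hctx : IsContext g A B p q)
    (h : Escapes g φ (V.erase (A, φ (p ++ z ++ q))) B z) :
    Pumpable g φ A (p ++ z ++ q) ∨ Escapes g φ V A (p ++ z ++ q) := by
  obtain ⟨r, hr, u, z', y, rfl, hV, hB, hz'⟩ := h
  by_cases hmem : (r.input, φ z') ∈ V
  · have hrepeat : (r.input, φ z') = (A, φ (p ++ (u ++ z' ++ y) ++ q)) := by
      by_contra hne
      exact hV (Finset.mem_erase.mpr ⟨hne, hmem⟩)
    obtain ⟨rfl, hφ⟩ := Prod.mk.inj hrepeat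
    have hvx : p ++ u ++ (y ++ q) ≠ [] := by
      simp only [ne_eq, List.append_eq_nil_iff] at hpq ⊢
      tauto
    exact .inl ⟨r.input, [], p ++ u, z', y ++ q, [], by simp, hvx, by simp [hφ], .refl _,
      hctx.trans hB, hz'⟩
  · exact .inr (.of_isContext hctx ⟨r, hr, u, z', y, rfl, hmem, hB, hz'⟩)

lemma pumpable_or_escapes {m : ℕ} (hm₀ : 0 < m) (hm : ∀ r ∈ g.rules, r.output.length ≤ m)
    (V : Finset (g.NT × C)) {A : g.NT} {w : List T} (hw : w ∈ derivedLanguage g A)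
    (hlen : m ^ (V.card + 1) < w.length) : Pumpable g φ A w ∨ Escapes g φ V A w := by
  classical
  induction V using Finset.strongInduction generalizing A w with
  | H V ih =>
    rw [pow_succ'] at hlen
    obtain ⟨r, hr, hA, B, p, z, q, rfl, hpq, hctx, hz, hcz⟩ :=
      branches_of_mem_derivedLanguage hm (Nat.pow_pos hm₀) hw hlen
    by_cases hV : (r.input, φ (p ++ z ++ q)) ∈ V
    · rw [← Finset.card_erase_add_one hV] at hcz
      have hr_or : Pumpable g φ r.input (p ++ z ++ q) ∨ Escapes g φ V r.input (p ++ z ++ q) :=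
        (ih _ (Finset.erase_ssubset hV) hz hcz).elim (.inl ∘ .of_isContext hctx)
          (pumpable_or_escapes_of_escapes_erase hpq hctx)
      simpa only [List.nil_append, List.append_nil] using
        hr_or.imp (Pumpable.of_isContext hA) (Escapes.of_isContext hA)
    · exact .inr ⟨r, hr, [], p ++ z ++ q, [], by simp, hV, hA, hctx hz⟩

lemma exists_pumpable_length (g : ContextFreeGrammar T) (hfin : (Set.range φ).Finite) :
    ∃ M : ℕ, ∀ w ∈ g.language, M < w.length → Pumpable g φ g.initial w := by
  classical
  let V : Finset (g.NT × C) := g.rules.image ContextFreeRule.input ×ˢ hfin.toFinset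
  let m : ℕ := g.rules.sup fun r ↦ r.output.length
  have hm : ∀ r ∈ g.rules, r.output.length ≤ m + 1 := fun r hr ↦
    (Finset.le_sup (f := fun r : ContextFreeRule T g.NT ↦ r.output.length) hr).trans m.le_succ
  refine ⟨(m + 1) ^ (V.card + 1), fun w hw hlen ↦
    (pumpable_or_escapes m.succ_pos hm V hw hlen).resolve_right ?_⟩
  rintro ⟨r, hr, u, z, y, -, hV, -⟩
  exact hV (Finset.mem_product.mpr ⟨Finset.mem_image_of_mem _ hr, by simp⟩)

end Pumping

section WordCongruences

variable {T C : Type*}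

/-- The fibres of `φ` are the classes of a congruence for concatenation of words. -/
def IsWordCongruence (φ : List T → C) : Prop :=
  ∀ ⦃z z'⦄, φ z = φ z' → ∀ u y, φ (u ++ z ++ y) = φ (u ++ z' ++ y)

lemma isWordCongruence_take (n : ℕ) : IsWordCongruence (List.take n : List T → List T) := by
  intro z z' h u y
  have htake : ∀ j ≤ n, z.take j = z'.take j := fun j hj ↦ by
    simpa only [List.take_take, min_eq_left hj] using congrArg (List.take j) h
  have hlen : min n z.length = min n z'.length := by
    simpa only [List.length_take] using congrArg List.length h
  have hrest : n - (u ++ z).length = n - (u ++ z').length := by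
    simp only [List.length_append]
    omega
  simp only [List.take_append, htake _ (Nat.sub_le n _), hrest]

lemma finite_range_take [Finite T] (n : ℕ) : (Set.range (List.take n : List T → List T)).Finite :=
  (List.finite_length_le T n).subset <| by
    rintro _ ⟨w, rfl⟩
    exact List.length_take_le n w

end WordCongruences

section PumpingLemma

variable {T : Type} {C : Type*}

lemma wordPow_succ_eq_append (v : List T) (i : ℕ) : wordPow v (i + 1) = wordPow v i ++ v := by
  induction i with
  | zero => exact List.append_nil v
  | succ i ih => rw [wordPow, ih, ← List.append_assoc, ← wordPow, ih]

lemma length_wordPow (v : List T) (i : ℕ) : (wordPow v i).length = i * v.length := by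
  induction i with
  | zero => simp [wordPow]
  | succ i ih => rw [wordPow, List.length_append, ih, add_one_mul, add_comm]

lemma wordPow_mem_derivedLanguage {g : ContextFreeGrammar T} {φ : List T → C}
    (hφ : IsWordCongruence φ) {B : g.NT} {v z x : List T} (hloop : IsContext g B B v x)
    (hvzx : φ (v ++ z ++ x) = φ z) (hz : z ∈ derivedLanguage g B) (i : ℕ) :
    wordPow v i ++ z ++ wordPow x i ∈ derivedLanguage g B ∧
      φ (wordPow v i ++ z ++ wordPow x i) = φ z := by
  induction i with
  | zero => simpa [wordPow] using hz
  | succ i ih =>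
    have hsucc : wordPow v (i + 1) ++ z ++ wordPow x (i + 1) =
        v ++ (wordPow v i ++ z ++ wordPow x i) ++ x := by
      rw [wordPow_succ_eq_append x, wordPow]
      simp only [List.append_assoc]
    rw [hsucc]
    exact ⟨hloop ih.1, (hφ ih.2 v x).trans hvzx⟩

theorem exists_pumping_length (g : ContextFreeGrammar T) {φ : List T → C}
    (hφ : IsWordCongruence φ) (hfin : (Set.range φ).Finite) :
    ∃ M : ℕ, ∀ w ∈ g.language, M < w.length →
      ∃ u v z x y, w = u ++ (v ++ z ++ x) ++ y ∧ v ++ x ≠ [] ∧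
        ∀ i : ℕ, u ++ (wordPow v i ++ z ++ wordPow x i) ++ y ∈ g.language ∧
          φ (u ++ (wordPow v i ++ z ++ wordPow x i) ++ y) = φ w := by
  obtain ⟨M, hM⟩ := exists_pumpable_length g hfin
  refine ⟨M, fun w hw hlen ↦ ?_⟩
  obtain ⟨B, u, v, z, x, y, rfl, hne, hvzx, hctx, hloop, hz⟩ := hM w hw hlen
  refine ⟨u, v, z, x, y, rfl, hne, fun i ↦ ?_⟩
  obtain ⟨hmem, hval⟩ := wordPow_mem_derivedLanguage hφ hloop hvzx hz i
  exact ⟨hctx hmem, hφ (hval.trans hvzx.symm) u y⟩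

end PumpingLemma

lemma replicate_append_cons_inj {α : Type*} {a b : α} (hab : a ≠ b) {m n : ℕ} {s t : List α} :
    List.replicate m a ++ b :: s = List.replicate n a ++ b :: t ↔ m = n ∧ s = t := by
  induction m generalizing n with
  | zero => cases n <;> simp [List.replicate_succ, hab.symm]
  | succ m ih => cases n <;> simp [List.replicate_succ, hab, ih]

lemma take_succ_replicate_append_eq_iff {α : Type*} {a b : α} (hab : a ≠ b) {j k n : ℕ}
    (hn : 1 ≤ n) {s : List α} :
    (List.replicate j a ++ List.replicate n b ++ s).take (k + 1) = List.replicate k a ++ [b] ↔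
      j = k := by
  obtain ⟨n, rfl⟩ := Nat.exists_eq_add_of_le' hn
  constructor
  · intro h
    have hword := List.take_append_drop (k + 1)
      (List.replicate j a ++ List.replicate (n + 1) b ++ s)
    rw [h, List.replicate_succ (a := b), List.append_assoc, List.append_assoc,
      List.singleton_append, List.cons_append, replicate_append_cons_inj hab] at hword
    exact hword.1.symm
  · rintro rfl
    simp [List.take_append, List.replicate_succ]

lemma length_of_mem_LH {H : Set ℕ} {k : ℕ} (hk : k ∉ H) {w : List (Fin 2)} (hw : w ∈ LH H)
    (hpre : w.take (k + 1) = List.replicate k 0 ++ [1]) :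
    w.length = 2 * k ∨ ∃ l ∈ H, w.length = 2 * k + 2 * l := by
  rcases hw with ⟨j, l, hj, -, hH, rfl⟩ | ⟨j, hj, rfl⟩
  · rw [List.append_assoc _ (List.replicate l 0)] at hpre
    obtain rfl := (take_succ_replicate_append_eq_iff zero_ne_one hj).mp hpre
    refine .inr ⟨l, hH.resolve_left hk, ?_⟩
    simp only [List.length_append, List.length_replicate]
    omega
  · rw [← List.append_nil (_ ++ _)] at hpre
    obtain rfl := (take_succ_replicate_append_eq_iff zero_ne_one hj).mp hpre
    simp [two_mul]

theorem LH_not_contextFree_general (H : Set ℕ) (hinf : H.Infinite)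
    (hprog : ∀ a d : ℕ, 0 < d → ∃ i, a + i * d ∉ H) :
    ¬ Language.IsContextFree (T := Fin 2) (LH H) := by
  rintro ⟨g, hg⟩
  obtain ⟨k, hk₁, hk⟩ : ∃ k, 1 ≤ k ∧ k ∉ H :=
    (hprog 1 1 one_pos).elim fun j hj ↦ ⟨_, Nat.le_add_right _ _, hj⟩
  obtain ⟨M, hM⟩ := exists_pumping_length g (isWordCongruence_take (k + 1)) (finite_range_take _)
  obtain ⟨l, hlH, hlM⟩ := hinf.exists_gt M
  let w : List (Fin 2) := List.replicate k 0 ++ List.replicate k 1 ++ List.replicate l 0 ++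
    List.replicate l 1
  have hw : w ∈ LH H := .inl ⟨k, l, hk₁, by omega, .inr hlH, rfl⟩
  have hlen : w.length = 2 * k + 2 * l := by
    simp only [w, List.length_append, List.length_replicate]
    omega
  have hpre : w.take (k + 1) = List.replicate k 0 ++ [1] := by
    simpa only [w, List.append_assoc] using
      (take_succ_replicate_append_eq_iff zero_ne_one hk₁).mpr rfl
  obtain ⟨u, v, z, x, y, hfactor, hne, hpump⟩ := hM w (hg.symm ▸ hw) (by omega)
  have hd : 0 < v.length + x.length := by
    simpa only [List.length_append] using List.length_pos_of_ne_nil hne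
  obtain ⟨i, hi⟩ := hprog l _ hd
  -- Replacing `l` by `l + 1` adds two letters, whence the factor `2`.
  obtain ⟨hmem, htake⟩ := hpump (2 * i + 1)
  have hlen' : (u ++ (wordPow v (2 * i + 1) ++ z ++ wordPow x (2 * i + 1)) ++ y).length =
      2 * k + 2 * (l + i * (v.length + x.length)) := by
    rw [hfactor] at hlen
    simp only [List.length_append, length_wordPow] at hlen ⊢
    linarith
  rcases length_of_mem_LH hk (hg ▸ hmem) (htake.trans hpre) with hk_len | ⟨l', hl'H, hl'_len⟩
  · omega
  · obtain rfl : l' = l + i * (v.length + x.length) := by omega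
    exact hi hl'H

lemma exists_add_mul_not_isSquare (a : ℕ) {d : ℕ} (hd : 0 < d) : ∃ i, ¬ IsSquare (a + i * d) := by
  by_contra! hsq
  obtain ⟨m, hm⟩ := hsq d
  obtain ⟨n, hn⟩ := hsq (d + 1)
  have hdm : d ≤ m := Nat.mul_self_le_mul_self_iff.mp (by omega)
  have hgap : n * n = m * m + d := by
    rw [← hm, ← hn]
    ring
  have hlt : m * m + d < (m + 1) * (m + 1) := by linarith
  exact Nat.not_exists_sq (Nat.lt_add_of_pos_right hd) hlt ⟨n, hgap⟩

/-- If `H` is an infinite set of positive perfect squares, then `L_H` is not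
context-free (Example 5). -/
theorem LH_not_contextFree (H : Set ℕ) (hinf : H.Infinite)
    (hsq : H ⊆ {n | ∃ m : ℕ, 1 ≤ m ∧ n = m ^ 2}) :
    ¬ Language.IsContextFree (T := Fin 2) (LH H) := by
  refine LH_not_contextFree_general H hinf fun a d hd ↦
    (exists_add_mul_not_isSquare a hd).imp fun i hi hmem ↦ ?_
  obtain ⟨m, -, hm⟩ := hsq hmem
  exact hi (hm ▸ IsSquare.sq m)
end

section
/- Let H be an infinite subset of the set of positive perfect squares {1², 2², 3², …}, and let L_H = { a^k b^k a^l b^l : k, l ≥ 1, and (k ∈ H or l ∈ H) } ∪ { a^m b^m : m ≥ 1 } over the alphabet {a, b}. Then L_H is not linear. -/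
/-!
Linear languages satisfy an interchange property. In a linear derivation each sentential form is
`u B w` with a single nonterminal `B`, and `|u| + |w|` grows by a bounded amount per step. So
derivations of long words can be cut at sentential forms with outer parts of any prescribed length
up to a constant, and among infinitely many such cuts two have the same nonterminal but outer parts
of different lengths. The outer parts of one word may then be wrapped around the inner part of the
other.

Applied to the words `aʰbʰaʰbʰ` with `h ∈ H` large, the outer parts lie in the first block of `a`s
and the last block of `b`s. The interchange gives a word `aⁱbʰaʰbʲ` of `L_H` with `i + j ≠ 2h`,
whereas membership in `L_H` forces `i = h = j`.
-/

/-- The number of terminals on the right-hand side of a linear production. -/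
def LinearRule.size {T N : Type} (r : LinearRule T N) : ℕ :=
  match r.output with
  | Sum.inl u => u.length
  | Sum.inr (u, _, w) => u.length + w.length

/-- `LinDerivesForm rs A u B w` : from the nonterminal `A`, the linear productions in `rs` derive
the sentential form `u B w` in zero or more steps. -/
inductive LinDerivesForm {T N : Type} (rs : List (LinearRule T N)) :
    N → List T → N → List T → Prop
  | refl (A : N) : LinDerivesForm rs A [] A []
  | step {A B D : N} {u w u' w' : List T}
      (hr : (⟨A, Sum.inr (u, B, w)⟩ : LinearRule T N) ∈ rs)
      (hB : LinDerivesForm rs B u' D w') :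
      LinDerivesForm rs A (u ++ u') D (w' ++ w)

section Derivations

variable {T N : Type} {rs : List (LinearRule T N)} {A B : N}

theorem LinDerivesForm.linDerives {u q w : List T} (h : LinDerivesForm rs A u B w)
    (hq : LinDerives rs B q) : LinDerives rs A (u ++ q ++ w) := by
  induction h with
  | refl => simpa using hq
  | step hr _ ih => simpa using LinDerives.step hr (ih hq)

theorem LinDerives.mem_map_input {p : List T} (h : LinDerives rs A p) :
    A ∈ rs.map LinearRule.input := by
  cases h with
  | terminal hr | step hr _ => exact List.mem_map_of_mem (f := LinearRule.input) hr

theorem LinDerives.exists_linDerivesForm {C : ℕ} (hC : ∀ r ∈ rs, r.size ≤ C) {p : List T}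
    (h : LinDerives rs A p) {t : ℕ} (ht : t + C < p.length) :
    ∃ B u q w, p = u ++ q ++ w ∧ LinDerivesForm rs A u B w ∧ LinDerives rs B q ∧
      t ≤ u.length + w.length ∧ u.length + w.length ≤ t + C := by
  induction h generalizing t with
  | @terminal A u hr =>
    have hu : u.length ≤ C := hC _ hr
    omega
  | @step A B u w p hr hp ih =>
    have huw : u.length + w.length ≤ C := hC _ hr
    simp only [List.length_append] at ht
    by_cases htu : t ≤ u.length + w.length
    · exact ⟨B, u, p, w, rfl, by simpa using LinDerivesForm.step hr (.refl B), hp, htu, by omega⟩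
    · obtain ⟨D, u', q, w', rfl, hform, hq, hlower, hupper⟩ :=
        ih (t := t - (u.length + w.length)) (by omega)
      refine ⟨D, u ++ u', q, w' ++ w, by simp, .step hr hform, hq, ?_, ?_⟩ <;>
        simp only [List.length_append] <;> omega

end Derivations

/-- The interchange property of linear languages: any sequence of words of `L` whose lengths grow
fast enough contains two words `u q w` and `u' q' w'` with outer parts of controlled but different
lengths such that `u' q w'` belongs to `L`. -/
def HasInterchangeProperty {T : Type} (L : Set (List T)) : Prop :=
  ∃ C, ∀ p : ℕ → List T, (∀ n, p n ∈ L) → (∀ n, n + C < (p n).length) →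
    ∃ m n u q w u' q' w', p m = u ++ q ++ w ∧ p n = u' ++ q' ++ w' ∧
      u.length + w.length ≤ m + C ∧ u'.length + w'.length ≤ n + C ∧
      u.length + w.length < u'.length + w'.length ∧ u' ++ q ++ w' ∈ L

theorem LinearGrammar.hasInterchangeProperty_language {T : Type} (G : LinearGrammar T) :
    HasInterchangeProperty G.language := by
  obtain ⟨C, hC⟩ : ∃ C, ∀ r ∈ G.rules, r.size ≤ C :=
    ⟨(G.rules.map LinearRule.size).sum, fun r hr => List.le_sum_of_mem (List.mem_map_of_mem hr)⟩
  refine ⟨C, fun p hp hlen => ?_⟩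
  choose B u q w hpuqw hform hq hlower hupper using
    fun n => LinDerives.exists_linDerivesForm hC (hp n) (hlen n)
  -- Indices that are multiples of `C + 1` are so far apart that their outer parts differ in length.
  obtain ⟨k, l, hkl, hB⟩ : ∃ k l, k < l ∧ B ((C + 1) * k) = B ((C + 1) * l) :=
    (List.finite_toSet (G.rules.map LinearRule.input)).exists_lt_map_eq_of_forall_mem
      fun n => (hq ((C + 1) * n)).mem_map_input
  have hgap : (C + 1) * k + C < (C + 1) * l := by
    calc (C + 1) * k + C < (C + 1) * (k + 1) := by lia
      _ ≤ (C + 1) * l := Nat.mul_le_mul_left _ hkl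
  exact ⟨_, _, _, _, _, _, _, _, hpuqw ((C + 1) * k), hpuqw ((C + 1) * l), hupper _, hupper _,
    ((hupper _).trans_lt hgap).trans_le (hlower _), (hform _).linDerives (hB ▸ hq _)⟩

theorem IsLinearLang.hasInterchangeProperty {T : Type} {L : Set (List T)} (hL : IsLinearLang L) :
    HasInterchangeProperty L := by
  obtain ⟨G, hG⟩ := hL
  obtain ⟨C, hC⟩ := G.hasInterchangeProperty_language
  refine ⟨C, fun p hp hlen => ?_⟩
  have hne (n : ℕ) : p n ≠ [] := List.ne_nil_of_length_pos (by have := hlen n; omega)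
  obtain ⟨m, n, u, q, w, u', q', w', hm, hn, hum, hun, hlt, hmem⟩ :=
    hC p (fun n => (hG _ (hne n)).1 (hp n)) hlen
  have hne' : u' ++ q ++ w' ≠ [] :=
    List.ne_nil_of_length_pos (by simp only [List.length_append]; omega)
  exact ⟨m, n, u, q, w, u', q', w', hm, hn, hum, hun, hlt, (hG _ hne').2 hmem⟩

theorem replicate_append_inj_of_head?_ne {T : Type*} {a : T} {m n : ℕ} {x y : List T}
    (hx : x.head? ≠ some a) (hy : y.head? ≠ some a)
    (h : List.replicate m a ++ x = List.replicate n a ++ y) : m = n ∧ x = y := by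
  induction m generalizing n <;> cases n <;> grind

/-- The word `aⁱ bʲ aᵏ bˡ`, with `a = 0` and `b = 1`. -/
def blockWord (i j k l : ℕ) : List (Fin 2) :=
  List.replicate i 0 ++ List.replicate j 1 ++ List.replicate k 0 ++ List.replicate l 1

section BlockWord

variable {i j k l : ℕ}

theorem length_blockWord : (blockWord i j k l).length = i + j + k + l := by
  simp [blockWord, add_assoc]

theorem replicate_append_blockWord_append_replicate (m n : ℕ) :
    List.replicate m 0 ++ blockWord i j k l ++ List.replicate n 1 =
      blockWord (m + i) j k (l + n) := by
  simp only [blockWord, List.replicate_add, List.append_assoc]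

theorem blockWord_inj {i' j' k' l' : ℕ} (hj : 0 < j) (hk : 0 < k) (hj' : 0 < j') (hk' : 0 < k')
    (h : blockWord i j k l = blockWord i' j' k' l') : i = i' ∧ j = j' ∧ k = k' ∧ l = l' := by
  simp only [blockWord, List.append_assoc] at h
  obtain ⟨hi, h⟩ := replicate_append_inj_of_head?_ne (by grind) (by grind) h
  obtain ⟨hj, h⟩ := replicate_append_inj_of_head?_ne (by grind) (by grind) h
  obtain ⟨hk, h⟩ := replicate_append_inj_of_head?_ne (by grind) (by grind) h
  exact ⟨hi, hj, hk, by simpa using congrArg List.length h⟩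

theorem blockWord_ne_replicate_append_replicate {m n : ℕ} (hj : 0 < j) (hk : 0 < k) :
    blockWord i j k l ≠ List.replicate m 0 ++ List.replicate n 1 := by
  intro h
  rw [← List.append_nil (List.replicate n 1)] at h
  simp only [blockWord, List.append_assoc] at h
  obtain ⟨-, h⟩ := replicate_append_inj_of_head?_ne (by grind) (by grind) h
  obtain ⟨-, h⟩ := replicate_append_inj_of_head?_ne (by grind) (by grind) h
  simp [hk.ne'] at h

theorem blockWord_mem_LH_iff {H : Set ℕ} (hj : 0 < j) (hk : 0 < k) :
    blockWord i j k l ∈ LH H ↔ i = j ∧ k = l ∧ (j ∈ H ∨ k ∈ H) := by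
  constructor
  · rintro (⟨r, s, hr, hs, hH, h⟩ | ⟨m, -, h⟩)
    · obtain ⟨rfl, rfl, rfl, rfl⟩ := blockWord_inj hj hk hr hs h
      exact ⟨rfl, rfl, hH⟩
    · exact absurd h (blockWord_ne_replicate_append_replicate hj hk)
  · rintro ⟨rfl, rfl, hH⟩
    exact .inl ⟨i, k, hj, hk, hH, rfl⟩

theorem blockWord_eq_append {u q w : List (Fin 2)} (hu : u.length ≤ i) (hw : w.length ≤ l)
    (h : blockWord i j k l = u ++ q ++ w) :
    u = List.replicate u.length 0 ∧ q = blockWord (i - u.length) j k (l - w.length) ∧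
      w = List.replicate w.length 1 := by
  have hsplit : u ++ q ++ w = List.replicate u.length 0 ++
      blockWord (i - u.length) j k (l - w.length) ++ List.replicate w.length 1 := by
    rw [← h, replicate_append_blockWord_append_replicate, Nat.add_sub_cancel' hu,
      Nat.sub_add_cancel hw]
  obtain ⟨huq, hw'⟩ := List.append_inj' hsplit (by simp)
  obtain ⟨hu', hq⟩ := List.append_inj huq (by simp)
  exact ⟨hu', hq, hw'⟩

end BlockWord

theorem LH_not_linear_general (H : Set ℕ) (hinf : H.Infinite) : ¬ IsLinearLang (LH H) := by
  intro hL
  obtain ⟨C, hC⟩ := hL.hasInterchangeProperty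
  choose h hH hlt using fun n => hinf.exists_gt (n + C)
  have hpos (n : ℕ) : 0 < h n := (hlt n).pos
  obtain ⟨m, n, u, q, w, u', q', w', hm, hn, hum, hun, huw, hmem⟩ :=
    hC (fun n => blockWord (h n) (h n) (h n) (h n))
      (fun n => (blockWord_mem_LH_iff (hpos n) (hpos n)).2 ⟨rfl, rfl, .inl (hH n)⟩)
      (fun n => by rw [length_blockWord]; have := hlt n; omega)
  have hltm := hlt m
  have hltn := hlt n
  obtain ⟨-, hq, -⟩ := blockWord_eq_append (by omega) (by omega) hm
  obtain ⟨hu', -, hw'⟩ := blockWord_eq_append (by omega) (by omega) hn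
  rw [hq, hu', hw', replicate_append_blockWord_append_replicate,
    blockWord_mem_LH_iff (hpos m) (hpos m)] at hmem
  omega

/-- If `H` is an infinite set of positive perfect squares, then `L_H` is not
linear (Example 5). -/
theorem LH_not_linear (H : Set ℕ) (hinf : H.Infinite)
    (hsq : H ⊆ {n | ∃ m : ℕ, 1 ≤ m ∧ n = m ^ 2}) :
    ¬ IsLinearLang (LH H) :=
  LH_not_linear_general H hinf
end

section
/- The language L = { a^m b^m : m ∈ ℕ } ∪ { a^m c b^{2m} : m ∈ ℕ } over the alphabet {a, b, c} is not k-rated linear for any nonnegative rational k; in particular, it is not fix-rated linear. -/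
/-- The language `{aᵐ bᵐ : m ∈ ℕ} ∪ {aᵐ c b²ᵐ : m ∈ ℕ}` (Example 9).  Here the
alphabet `{a, b, c}` is `Fin 3` with `a = 0`, `b = 1`, `c = 2`. -/
def abcLang : Set (List (Fin 3)) :=
  {p | (∃ m : ℕ, p = List.replicate m 0 ++ List.replicate m 1) ∨
       (∃ m : ℕ, p = List.replicate m 0 ++ [2] ++ List.replicate (2 * m) 1)}

/-!
Rated linear languages satisfy a pumping lemma in which the two pumped pieces `x` and `y` lie near
the two ends of the word and obey the rate, `h |y| = g |x|`. In a word `aᵐ z bⁿ` with long outer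
blocks, `x` and `y` are therefore powers of `a` and `b`, so pumping moves `(m, n)` in the direction
`(h, g)`. If `aᵐ z bⁿ` lies in the language exactly when `n = r m`, this forces `g / h = r`.
In `abcLang`, the words `aᵐ bⁿ` force the rate `1` and the words `aᵐ c bⁿ` the rate `2`.
-/

section Words

variable {T : Type}

theorem wordPow_append_self (v : List T) (n : ℕ) : wordPow v n ++ v = v ++ wordPow v n := by
  induction n with
  | zero => simp [wordPow]
  | succ n ih => rw [wordPow, List.append_assoc, ih]

theorem wordPow_replicate (a : T) (s n : ℕ) :
    wordPow (List.replicate s a) n = List.replicate (n * s) a := by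
  induction n with
  | zero => simp [wordPow]
  | succ n ih => rw [wordPow, ih, List.replicate_append_replicate, Nat.succ_mul, Nat.add_comm]

theorem eq_replicate_of_replicate_append_eq {a b : T} {z u q w : List T} {m n : ℕ}
    (heq : List.replicate (u.length + m) a ++ z ++ List.replicate (n + w.length) b = u ++ q ++ w) :
    u = List.replicate u.length a ∧ w = List.replicate w.length b ∧
      q = List.replicate m a ++ z ++ List.replicate n b := by
  have hsplit : List.replicate u.length a ++
      ((List.replicate m a ++ z ++ List.replicate n b) ++ List.replicate w.length b) =
      u ++ (q ++ w) := by
    simpa only [← List.replicate_append_replicate, List.append_assoc] using heq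
  obtain ⟨hu, hqw⟩ := List.append_inj hsplit List.length_replicate
  obtain ⟨hq, hw⟩ := List.append_inj' hqw List.length_replicate
  exact ⟨hu.symm, hw.symm, hq.symm⟩

end Words

namespace LinearGrammar

variable {T : Type} {G : LinearGrammar T}

/-- `G.DerivesForm A u B w` says that the sentential form `u B w` is derivable from the
nonterminal `A`, that is, `A ⇒* u B w`. -/
inductive DerivesForm (G : LinearGrammar T) : G.NT → List T → G.NT → List T → Prop
  | refl (A : G.NT) : DerivesForm G A [] A []
  | step {A B D : G.NT} {u w x y : List T}
      (hr : (⟨A, Sum.inr (u, B, w)⟩ : LinearRule T G.NT) ∈ G.rules)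
      (hB : DerivesForm G B x D y) :
      DerivesForm G A (u ++ x) D (y ++ w)

namespace DerivesForm

theorem trans {A B D : G.NT} {u w x y : List T} (hA : G.DerivesForm A u B w)
    (hB : G.DerivesForm B x D y) : G.DerivesForm A (u ++ x) D (y ++ w) := by
  induction hA with
  | refl => simpa using hB
  | step hr _ ih => simpa using step hr (ih hB)

theorem linDerives {A B : G.NT} {u w q : List T} (hA : G.DerivesForm A u B w)
    (hq : LinDerives G.rules B q) : LinDerives G.rules A (u ++ q ++ w) := by
  induction hA with
  | refl => simpa using hq
  | step hr _ ih => simpa using LinDerives.step hr (ih hq)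

theorem wordPow {A : G.NT} {x y : List T} (hA : G.DerivesForm A x A y) (n : ℕ) :
    G.DerivesForm A (wordPow x n) A (wordPow y n) := by
  induction n with
  | zero => exact refl A
  | succ n ih => simpa only [_root_.wordPow, wordPow_append_self] using hA.trans ih

theorem length_eq {g h : ℕ} (hG : G.IsRated g h) {A B : G.NT} {u w : List T}
    (hA : G.DerivesForm A u B w) : h * w.length = g * u.length := by
  induction hA with
  | refl => simp
  | step hr _ ih =>
    simp only [List.length_append, mul_add, ih, hG _ hr _ _ _ rfl]
    ring

end DerivesForm

theorem input_mem_of_linDerives {A : G.NT} {p : List T} (hp : LinDerives G.rules A p) :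
    A ∈ G.rules.map LinearRule.input := by
  cases hp with
  | terminal hr => exact List.mem_map_of_mem hr
  | step hr _ => exact List.mem_map_of_mem hr

theorem exists_rule_size_le (G : LinearGrammar T) : ∃ C, ∀ r ∈ G.rules, r.size ≤ C := by
  obtain ⟨C, hC⟩ := ((List.finite_toSet G.rules).image LinearRule.size).bddAbove
  exact ⟨C, fun r hr => hC ⟨r, hr, rfl⟩⟩

theorem exists_derivesForm_of_size_lt_length {C : ℕ} (hC : ∀ r ∈ G.rules, r.size ≤ C) {A : G.NT}
    {p : List T} (hp : LinDerives G.rules A p) (hlen : C < p.length) :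
    ∃ u B w q, p = u ++ q ++ w ∧ G.DerivesForm A u B w ∧ LinDerives G.rules B q ∧
      0 < u.length + w.length ∧ u.length + w.length ≤ C := by
  induction hp with
  | terminal hr => exact absurd (hC _ hr) hlen.not_ge
  | @step A B u w p hr hp ih =>
    have hform : G.DerivesForm A u B w := by simpa using DerivesForm.step hr (.refl B)
    rcases Nat.eq_zero_or_pos (u.length + w.length) with hunit | hpos
    · obtain ⟨rfl, rfl⟩ : u = [] ∧ w = [] := by simpa using hunit
      obtain ⟨u, D, w, q, rfl, hB, hq, hsize⟩ := ih (by simpa using hlen)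
      exact ⟨u, D, w, q, by simp, by simpa using hform.trans hB, hq, hsize⟩
    · exact ⟨u, B, w, p, rfl, hform, hp, hpos, hC _ hr⟩

/-- `G.HasLoopWithin n A p` says that the word `p` has a derivation from `A` that repeats a
nonterminal near the outside: `A ⇒* u B w ⇒* u x B y w ⇒* u x q y w = p`, where `x` and `y` are not
both empty and `|u x| + |y w| ≤ n`. -/
def HasLoopWithin (G : LinearGrammar T) (n : ℕ) (A : G.NT) (p : List T) : Prop :=
  ∃ u B w x y q, p = u ++ x ++ q ++ y ++ w ∧ G.DerivesForm A u B w ∧ G.DerivesForm B x B y ∧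
    LinDerives G.rules B q ∧ 0 < x.length + y.length ∧ (u ++ x).length + (y ++ w).length ≤ n

theorem HasLoopWithin.of_derivesForm {m n : ℕ} {A B : G.NT} {u w p : List T}
    (hp : G.HasLoopWithin n B p) (hA : G.DerivesForm A u B w)
    (hsize : u.length + w.length ≤ m) : G.HasLoopWithin (n + m) A (u ++ p ++ w) := by
  obtain ⟨u', D, w', x, y, q, rfl, hB, hloop, hq, hpos, hsize'⟩ := hp
  refine ⟨u ++ u', D, w' ++ w, x, y, q, by simp, hA.trans hB, hloop, hq, hpos, ?_⟩
  simp only [List.length_append] at hsize' ⊢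
  omega

theorem hasLoopWithin_or_exists_notMem {C : ℕ} (hC : ∀ r ∈ G.rules, r.size ≤ C)
    (V : Finset G.NT) {A : G.NT} {p : List T} (hp : LinDerives G.rules A p)
    (hlen : C * V.card < p.length) :
    G.HasLoopWithin (C * V.card) A p ∨
    ∃ u B w q, p = u ++ q ++ w ∧ G.DerivesForm A u B w ∧ LinDerives G.rules B q ∧ B ∉ V ∧
      u.length + w.length ≤ C * V.card := by
  classical
  induction V using Finset.strongInduction generalizing A p with
  | H V ih =>
    by_cases hA : A ∉ V
    · exact .inr ⟨[], A, [], p, by simp, .refl A, hp, hA, by simp⟩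
    rw [not_not] at hA
    rw [← Finset.card_erase_add_one hA, mul_add_one] at hlen ⊢
    obtain ⟨u, B, w, p, rfl, hAB, hp, hpos, hsize⟩ :=
      exists_derivesForm_of_size_lt_length hC hp (by omega)
    have hlen' : C * (V.erase A).card < p.length := by
      simp only [List.length_append] at hlen
      omega
    -- Continuing from `B`, the derivation leaves `V \ {A}` either by returning to `A`, which closes
    -- a loop, or by leaving `V`.
    rcases ih _ (Finset.erase_ssubset hA) hp hlen' with
      hloop | ⟨u', D, w', q, rfl, hBD, hq, hD, hsize'⟩
    · exact .inl (hloop.of_derivesForm hAB hsize)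
    have hAD := hAB.trans hBD
    have hsizeAD : (u ++ u').length + (w' ++ w).length ≤ C * (V.erase A).card + C := by
      simp only [List.length_append]
      omega
    by_cases hDA : D = A
    · subst hDA
      refine .inl ⟨[], D, [], u ++ u', w' ++ w, q, by simp, .refl D, hAD, hq, ?_,
        by simpa using hsizeAD⟩
      simp only [List.length_append]
      omega
    · exact .inr ⟨u ++ u', D, w' ++ w, q, by simp, hAD, hq,
        fun hDV => hD (Finset.mem_erase.2 ⟨hDA, hDV⟩), hsizeAD⟩

theorem exists_hasLoopWithin (G : LinearGrammar T) :
    ∃ K, ∀ A p, LinDerives G.rules A p → K < p.length → G.HasLoopWithin K A p := by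
  classical
  obtain ⟨C, hC⟩ := G.exists_rule_size_le
  let V := (G.rules.map LinearRule.input).toFinset
  refine ⟨C * V.card, fun A p hp hlen => ?_⟩
  refine (hasLoopWithin_or_exists_notMem hC V hp hlen).resolve_right ?_
  rintro ⟨_, B, _, q, -, -, hq, hB, -⟩
  exact hB (List.mem_toFinset.2 (input_mem_of_linDerives hq))

end LinearGrammar

namespace IsRatedLinearLang

variable {T : Type} {g h : ℕ} {L : Set (List T)}

theorem exists_pumping (hL : IsRatedLinearLang g h L) :
    ∃ K, ∀ p ∈ L, K < p.length → ∃ u x q y w, p = u ++ x ++ q ++ y ++ w ∧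
      0 < x.length + y.length ∧ (u ++ x).length + (y ++ w).length ≤ K ∧
      h * y.length = g * x.length ∧
      ∀ n, u ++ wordPow x n ++ q ++ wordPow y n ++ w ∈ L := by
  obtain ⟨G, hG, hgen⟩ := hL
  obtain ⟨K, hK⟩ := G.exists_hasLoopWithin
  refine ⟨K, fun p hp hlen => ?_⟩
  have hderives : LinDerives G.rules G.start p :=
    (hgen p (List.ne_nil_of_length_pos (by omega))).1 hp
  obtain ⟨u, B, w, x, y, q, rfl, hstart, hloop, hq, hpos, hsize⟩ := hK _ p hderives hlen
  refine ⟨u, x, q, y, w, rfl, hpos, hsize, hloop.length_eq hG, fun n => (hgen _ ?_).2 ?_⟩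
  · have hq_ne : q ≠ [] := by
      rintro rfl
      simp only [List.length_append, List.length_nil] at hlen hsize
      omega
    simp [hq_ne]
  · have hpump : LinDerives G.rules G.start _ := hstart.linDerives ((hloop.wordPow n).linDerives hq)
    simpa [LinearGrammar.language] using hpump

theorem exists_pumping_replicate (hL : IsRatedLinearLang g h L) (a b : T) (z : List T) :
    ∃ K, ∀ m n, K < m → K < n → List.replicate m a ++ z ++ List.replicate n b ∈ L →
      ∃ s t, 0 < s + t ∧ h * t = g * s ∧
        ∀ i, List.replicate (m + i * s) a ++ z ++ List.replicate (n + i * t) b ∈ L := by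
  obtain ⟨K, hK⟩ := hL.exists_pumping
  refine ⟨K, fun m n hm hn hmem => ?_⟩
  obtain ⟨u, x, q, y, w, heq, hpos, hsize, hrate, hpump⟩ :=
    hK _ hmem (by simp only [List.length_append, List.length_replicate]; omega)
  obtain ⟨m', rfl⟩ := Nat.exists_eq_add_of_le (show (u ++ x).length ≤ m by omega)
  obtain ⟨n', rfl⟩ := Nat.exists_eq_add_of_le' (show (y ++ w).length ≤ n by omega)
  rw [List.append_assoc _ y] at heq
  obtain ⟨hux, hyw, rfl⟩ := eq_replicate_of_replicate_append_eq heq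
  obtain ⟨-, hu, hx⟩ := List.append_eq_replicate_iff.1 hux
  obtain ⟨-, hy, hw⟩ := List.append_eq_replicate_iff.1 hyw
  refine ⟨x.length, y.length, hpos, hrate, fun i => ?_⟩
  have hm_eq : (u ++ x).length + m' + i * x.length = u.length + (i + 1) * x.length + m' := by
    rw [List.length_append]
    ring
  have hn_eq : n' + (y ++ w).length + i * y.length = n' + (i + 1) * y.length + w.length := by
    rw [List.length_append]
    ring
  have hpumped := hpump (i + 1)
  rw [hu, hx, hy, hw, wordPow_replicate, wordPow_replicate] at hpumped
  rw [hm_eq, hn_eq]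
  simpa only [← List.replicate_append_replicate, List.append_assoc] using hpumped

theorem rate_eq (hL : IsRatedLinearLang g h L) {a b : T} {z : List T} {r : ℕ} (hr : 0 < r)
    (hmem : ∀ m n, List.replicate m a ++ z ++ List.replicate n b ∈ L ↔ n = r * m) :
    g = r * h := by
  obtain ⟨K, hK⟩ := hL.exists_pumping_replicate a b z
  obtain ⟨s, t, hpos, hrate, hpump⟩ := hK (K + 1) (r * (K + 1)) K.lt_succ_self
    (K.lt_succ_self.trans_le (Nat.le_mul_of_pos_left _ hr)) ((hmem _ _).2 rfl)
  have hslope : t = r * s := by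
    have := (hmem _ _).1 (hpump 1)
    rwa [one_mul, one_mul, mul_add r (K + 1), Nat.add_left_cancel_iff] at this
  subst hslope
  have hs : 0 < s := Nat.pos_of_ne_zero fun hs => by simp [hs] at hpos
  exact Nat.eq_of_mul_eq_mul_right hs (by rw [← hrate]; ring)

end IsRatedLinearLang

theorem count_of_mem_abcLang {p : List (Fin 3)} (hp : p ∈ abcLang) :
    (p.count 2 = 0 ∧ p.count 1 = p.count 0) ∨ (p.count 2 = 1 ∧ p.count 1 = 2 * p.count 0) := by
  rcases hp with ⟨m, rfl⟩ | ⟨m, rfl⟩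
  · exact .inl (by simp [List.count_replicate])
  · exact .inr (by simp [List.count_replicate])

theorem replicate_append_replicate_mem_abcLang {m n : ℕ} :
    List.replicate m 0 ++ List.replicate n 1 ∈ abcLang ↔ n = m := by
  refine ⟨fun hmem => ?_, fun hnm => .inl ⟨m, by rw [hnm]⟩⟩
  simpa [List.count_replicate] using count_of_mem_abcLang hmem

theorem replicate_append_two_append_replicate_mem_abcLang {m n : ℕ} :
    List.replicate m 0 ++ [2] ++ List.replicate n 1 ∈ abcLang ↔ n = 2 * m := by
  refine ⟨fun hmem => ?_, fun hnm => .inr ⟨m, by rw [hnm]⟩⟩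
  simpa [List.count_replicate] using count_of_mem_abcLang hmem

/-- The language `{aᵐ bᵐ} ∪ {aᵐ c b²ᵐ}` is not `k`-rated linear for any
nonnegative rational `k = g/h`; in particular it is not fix-rated linear
(Example 9). -/
theorem abcLang_not_rated_linear :
    (∀ g h : ℕ, Nat.Coprime g h → h ≠ 0 → ¬ IsRatedLinearLang g h abcLang) ∧
    ¬ (∃ g h : ℕ, Nat.Coprime g h ∧ h ≠ 0 ∧ IsRatedLinearLang g h abcLang) := by
  have not_rated : ∀ g h : ℕ, h ≠ 0 → ¬ IsRatedLinearLang g h abcLang := by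
    intro g h hh hL
    have rate_one : g = 1 * h := hL.rate_eq (a := 0) (b := 1) (z := []) one_pos fun m n => by
      rw [List.append_nil, one_mul, replicate_append_replicate_mem_abcLang]
    have rate_two : g = 2 * h :=
      hL.rate_eq two_pos fun _ _ => replicate_append_two_append_replicate_mem_abcLang
    omega
  exact ⟨fun g h _ => not_rated g h, fun ⟨g, h, _, hh, hL⟩ => not_rated g h hh hL⟩
end
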